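/- Let M be a tropical oriented matroid with parameters (n,d) in general position. For each i ∈ [n] let I_i be a nonempty subset of [d] and let J_i = (J_{i,1}, …, J_{i,k_i}) be a partition of [d] into k_i nonempty blocks. Set M(I,J) = {A ∈ M : for all i ∈ [n], A_i ⊆ I_i and A_i ∩ J_{i,k} ≠ ∅ for all k ∈ [k_i]}. Then: (a) M(I,J) is convex, and hence connected if nonempty; (b) every A ∈ M(I,J) has dimension at most d + n − 1 − (k_1 + … + k_n); (c) for every A ∈ M(I,J) there exists B ∈ M(I,J) with B_i ⊆ A_i for all i ∈ [n] and with dimension exactly d + n − 1 − (k_1 + … + k_n). -/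

import Mathlib

/-- A step from `j` to `k` along an edge of the comparability graph `Γ(A,B)`,
traversed in an allowed direction: there is `i` with `j ∈ A i`, `k ∈ B i`, `j ≠ k`
(such an edge is undirected precisely when moreover `j ∈ B i` and `k ∈ A i`, and then
the reversed step is also of this form). -/
def CompStep {n d : ℕ} (A B : Fin n → Finset (Fin d)) (j k : Fin d) : Prop :=
  ∃ i, j ∈ A i ∧ k ∈ B i ∧ j ≠ k

/-- A traversal of a *directed* edge of `Γ(A,B)` in its given direction. -/
def CompDirStep {n d : ℕ} (A B : Fin n → Finset (Fin d)) (j k : Fin d) : Prop :=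
  ∃ i, j ∈ A i ∧ k ∈ B i ∧ j ≠ k ∧ ¬ (j ∈ B i ∧ k ∈ A i)

/-- The comparability graph `Γ(A,B)` is acyclic: there is no closed walk consisting
of legally traversed edges at least one of which is directed. -/
def CompAcyclic {n d : ℕ} (A B : Fin n → Finset (Fin d)) : Prop :=
  ¬ ∃ j k : Fin d, CompDirStep A B j k ∧ Relation.ReflTransGen (CompStep A B) k j

/-- An ordered partition of the ground set: a list of nonempty, pairwise disjoint
sets covering everything. -/
def IsOrderedPartition {α : Type*} [Fintype α] [DecidableEq α]
    (P : List (Finset α)) : Prop :=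
  (∀ p ∈ P, p.Nonempty) ∧ P.Pairwise Disjoint ∧ P.foldr (· ∪ ·) ∅ = Finset.univ

/-- `refineEntry s P = s ∩ P_{m}` where `m` is the first index with `s ∩ P_m ≠ ∅`. -/
def refineEntry {α : Type*} [DecidableEq α] (s : Finset α) :
    List (Finset α) → Finset α
  | [] => ∅
  | p :: rest => if (s ∩ p).Nonempty then s ∩ p else refineEntry s rest

/-- The refinement `A|_P` of a type `A` with respect to an ordered partition `P`. -/
def refineType {n d : ℕ} (A : Fin n → Finset (Fin d)) (P : List (Finset (Fin d))) :
    Fin n → Finset (Fin d) :=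
  fun i => refineEntry (A i) P

/-- `M` is a tropical oriented matroid with parameters `(n,d)`. -/
def IsTOM (n d : ℕ) (M : Set (Fin n → Finset (Fin d))) : Prop :=
  (∀ A ∈ M, ∀ i, (A i).Nonempty) ∧
  (∀ j : Fin d, (fun _ : Fin n => ({j} : Finset (Fin d))) ∈ M) ∧
  (∀ A ∈ M, ∀ B ∈ M, CompAcyclic A B) ∧
  (∀ A ∈ M, ∀ B ∈ M, ∀ j : Fin n, ∃ C ∈ M, C j = A j ∪ B j ∧
      ∀ k, C k = A k ∨ C k = B k ∨ C k = A k ∪ B k) ∧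
  (∀ A ∈ M, ∀ P : List (Finset (Fin d)), IsOrderedPartition P → refineType A P ∈ M)

/-- The type graph `K_A`: the bipartite graph on `N_1,…,N_n,D_1,…,D_d` with an edge
`{N_i, D_j}` whenever `j ∈ A_i`. -/
def typeGraph {n d : ℕ} (A : Fin n → Finset (Fin d)) : SimpleGraph (Fin n ⊕ Fin d) :=
  SimpleGraph.fromRel (fun x y =>
    match x, y with
    | Sum.inl i, Sum.inr j => j ∈ A i
    | _, _ => False)

/-- The dimension of a type: the number of connected components of `K_A` minus 1
(as an integer). -/
noncomputable def typeDim {n d : ℕ} (A : Fin n → Finset (Fin d)) : ℤ :=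
  (Nat.card (typeGraph A).ConnectedComponent : ℤ) - 1

/-- A tropical oriented matroid is in general position if all its type graphs are
acyclic. -/
def InGeneralPosition {n d : ℕ} (M : Set (Fin n → Finset (Fin d))) : Prop :=
  ∀ A ∈ M, (typeGraph A).IsAcyclic

/-- Two types are incident if one is an entrywise subset of the other. -/
def Incident {n d : ℕ} (X Y : Fin n → Finset (Fin d)) : Prop :=
  (∀ i, X i ⊆ Y i) ∨ (∀ i, Y i ⊆ X i)

/-- The combinatorial convex hull `M_{AB}` of two types within a collection `M`. -/
def Hull {n d : ℕ} (M : Set (Fin n → Finset (Fin d)))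
    (A B : Fin n → Finset (Fin d)) : Set (Fin n → Finset (Fin d)) :=
  {C | C ∈ M ∧ ∀ i, C i = A i ∨ C i = B i ∨ C i = A i ∪ B i}

/-- `X` and `Y` are joined by a finite sequence of types in `S` in which consecutive
types are incident. -/
def ConnectedIn {n d : ℕ} (S : Set (Fin n → Finset (Fin d)))
    (X Y : Fin n → Finset (Fin d)) : Prop :=
  Relation.ReflTransGen (fun U V => U ∈ S ∧ V ∈ S ∧ Incident U V) X Y

/-!
A weight function on `[d]` refines a type to its entrywise minimizers, so every subtype cut out by
minimizing weights belongs to `M`. Comparability supplies weights cutting `A ∩ B` out of `A` as soon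
as all `A i ∩ B i` are nonempty. Hence in a convex set two entrywise comparable types are joined
through their intersection, and elimination reduces an arbitrary pair to this case by enlarging, one
position at a time, the set of positions where the entries are comparable.

In general position `K_A` is a forest with `∑ i, #(A i)` edges, so
`dim A = n + d - 1 - ∑ i, #(A i)`. Its edges are bridges, and weighting the two sides of a bridge
differently deletes it from `A`; hence all subtypes of `A` with nonempty entries belong to `M`.
Entries meeting all blocks of `J i` have at least `k_i` elements, with equality for a transversal of
the blocks.
-/

open Finset SimpleGraph

section OrderedPartition

variable {α β : Type*} [DecidableEq α]

theorem mem_foldr_union (P : List (Finset α)) (x : α) :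
    x ∈ P.foldr (· ∪ ·) ∅ ↔ ∃ p ∈ P, x ∈ p := by
  induction P with
  | nil => simp
  | cons p P ih => simp [ih]

variable [Fintype α] [LinearOrder β]

/-- The ordered partition of a finite type into the nonempty fibers of `f`, listed by increasing
value of `f`. Refining along it keeps the minimizers of `f`, so weight functions can replace
explicit ordered partitions in the surrounding axiom. -/
def fiberPartition (f : α → β) : List (Finset α) :=
  (univ.image f).sort.map fun b => univ.filter (f · = b)

theorem isOrderedPartition_fiberPartition (f : α → β) :
    IsOrderedPartition (fiberPartition f) := by
  refine ⟨?_, ?_, ?_⟩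
  · simp [fiberPartition, Finset.Nonempty]
  · refine List.pairwise_map.2 ((sort_nodup _ _).imp fun hne => ?_)
    exact disjoint_filter.2 fun x _ hxa hxb => hne (hxa.symm.trans hxb)
  · exact eq_univ_of_forall fun x => (mem_foldr_union _ x).2
      ⟨univ.filter (f · = f x), List.mem_map.2 ⟨f x, by simp, rfl⟩, by simp⟩

theorem refineEntry_map_fiber (f : α → β) {s : Finset α} {l : List β}
    (hsorted : l.Pairwise (· ≤ ·)) (hl : ∀ x ∈ s, f x ∈ l) :
    refineEntry s (l.map fun b => univ.filter (f · = b)) = {x ∈ s | ∀ y ∈ s, f x ≤ f y} := by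
  induction l with
  | nil => simp [refineEntry, eq_empty_of_forall_notMem fun x hx => List.not_mem_nil (hl x hx)]
  | cons b l ih =>
    obtain ⟨hb, hsorted⟩ := List.pairwise_cons.1 hsorted
    rw [List.map_cons, refineEntry]
    split_ifs with hmeet
    · obtain ⟨z, hz⟩ := hmeet
      obtain ⟨hzs, rfl⟩ : z ∈ s ∧ f z = b := by simpa using hz
      have hz_min : ∀ y ∈ s, f z ≤ f y := fun y hy =>
        (List.mem_cons.1 (hl y hy)).elim (fun h => h.ge) (hb _)
      ext x
      simp only [mem_inter, mem_filter, mem_univ, true_and]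
      exact and_congr_right fun hx =>
        ⟨fun h y hy => h ▸ hz_min y hy, fun h => (h z hzs).antisymm (hz_min x hx)⟩
    · refine ih hsorted fun x hx => (List.mem_cons.1 (hl x hx)).resolve_left fun h => hmeet ⟨x, ?_⟩
      simpa using ⟨hx, h⟩

theorem refineEntry_fiberPartition (f : α → β) (s : Finset α) :
    refineEntry s (fiberPartition f) = {x ∈ s | ∀ y ∈ s, f x ≤ f y} :=
  refineEntry_map_fiber f (pairwise_sort _ _) (by simp)

end OrderedPartition

section Reachability

variable {α : Type*} [Finite α]

theorem exists_rank_reflTransGen (r : α → α → Prop) :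
    ∃ f : α → ℕ, ∀ x y, Relation.ReflTransGen r x y →
      f y ≤ f x ∧ (f x ≤ f y → Relation.ReflTransGen r y x) := by
  refine ⟨fun x => {z | Relation.ReflTransGen r x z}.ncard, fun x y hxy => ?_⟩
  have hsub : {z | Relation.ReflTransGen r y z} ⊆ {z | Relation.ReflTransGen r x z} :=
    fun z hyz => hxy.trans hyz
  refine ⟨Set.ncard_le_ncard hsub, fun hle => ?_⟩
  exact (Set.eq_of_subset_of_ncard_le hsub hle).ge Relation.ReflTransGen.refl

end Reachability

section Transversal

variable {α : Type*} [DecidableEq α]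

theorem exists_transversal_subset {s : Finset α} {J : Finset (Finset α)}
    (hJ : (J : Set (Finset α)).PairwiseDisjoint id) (hs : ∀ p ∈ J, (s ∩ p).Nonempty) :
    ∃ t ⊆ s, (∀ p ∈ J, (t ∩ p).Nonempty) ∧ #t = #J := by
  choose c hc using fun p : J => hs p p.2
  simp only [mem_inter] at hc
  have hc_inj : Function.Injective c := fun p q hpq =>
    Subtype.ext <| hJ.elim_finset p.2 q.2 _ (hc p).2 (hpq ▸ (hc q).2)
  refine ⟨univ.image c, ?_, fun p hp => ⟨c ⟨p, hp⟩, ?_⟩, ?_⟩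
  · exact image_subset_iff.2 fun p _ => (hc p).1
  · exact mem_inter.2 ⟨mem_image_of_mem c (mem_univ _), (hc ⟨p, hp⟩).2⟩
  · rw [card_image_of_injective _ hc_inj, card_univ, Fintype.card_coe]

end Transversal

section Forest

variable {V : Type*} [Fintype V] {G : SimpleGraph V} [DecidableRel G.Adj]

theorem degree_induce_supp (c : G.ConnectedComponent) [DecidablePred (· ∈ c.supp)] (v : c.supp) :
    (G.induce c.supp).degree v = G.degree v :=
  degree_induce_of_neighborSet_subset fun _ hw =>
    (ConnectedComponent.mem_supp_congr_adj c hw).1 v.2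

theorem sum_degree_supp_add_two (hG : G.IsAcyclic) (c : G.ConnectedComponent)
    [DecidablePred (· ∈ c.supp)] :
    ∑ v : c.supp, G.degree v + 2 = 2 * Fintype.card c.supp := by
  have htree : (G.induce c.supp).IsTree := hG.isTree_connectedComponent c
  simp only [← htree.card_edgeFinset, mul_add, ← sum_degrees_eq_twice_card_edges,
    degree_induce_supp, mul_one]

theorem card_edgeFinset_add_card_connectedComponent (hG : G.IsAcyclic) :
    #G.edgeFinset + Nat.card G.ConnectedComponent = Fintype.card V := by
  classical
  have hfibers (g : V → ℕ) : ∑ c : G.ConnectedComponent, ∑ v : c.supp, g v = ∑ v, g v := by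
    convert Fintype.sum_fiberwise G.connectedComponentMk g <;> rfl
  have hvertices : ∑ c : G.ConnectedComponent, Fintype.card c.supp = Fintype.card V := by
    simpa using hfibers fun _ => 1
  have hsum := Fintype.sum_congr _ _ fun c => sum_degree_supp_add_two hG c
  rw [sum_add_distrib, ← mul_sum, hvertices, hfibers (G.degree ·),
    sum_degrees_eq_twice_card_edges, sum_const, card_univ, ← Nat.card_eq_fintype_card,
    smul_eq_mul] at hsum
  lia

end Forest

section TypeGraph

variable {n d : ℕ} {A : Fin n → Finset (Fin d)} {i : Fin n} {j : Fin d}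

theorem typeGraph_adj_inl_inr : (typeGraph A).Adj (.inl i) (.inr j) ↔ j ∈ A i := by
  simp [typeGraph]

theorem isBipartiteWith_typeGraph (A : Fin n → Finset (Fin d)) :
    (typeGraph A).IsBipartiteWith
      (univ.map Function.Embedding.inl : Finset (Fin n ⊕ Fin d))
      (univ.map Function.Embedding.inr : Finset (Fin n ⊕ Fin d)) where
  disjoint := by simp [Set.disjoint_left]
  mem_of_adj := by rintro (i | j) (k | l) <;> simp [typeGraph]

theorem degree_typeGraph_inl [Fintype ((typeGraph A).neighborSet (.inl i))] :
    (typeGraph A).degree (.inl i) = #(A i) := by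
  have hnbr : (typeGraph A).neighborFinset (.inl i) = (A i).map .inr := by
    ext (k | j) <;> rw [mem_neighborFinset] <;> simp [typeGraph]
  rw [← card_neighborFinset_eq_degree, hnbr, card_map]

theorem card_edgeFinset_typeGraph [DecidableRel (typeGraph A).Adj] :
    #(typeGraph A).edgeFinset = ∑ i, #(A i) := by
  rw [← isBipartiteWith_sum_degrees_eq_card_edges (isBipartiteWith_typeGraph A), sum_map]
  exact sum_congr rfl fun i _ => degree_typeGraph_inl

theorem typeDim_eq_of_isAcyclic (hA : (typeGraph A).IsAcyclic) :
    typeDim A = (d : ℤ) + n - 1 - ∑ i, (#(A i) : ℤ) := by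
  classical
  have hcount := card_edgeFinset_add_card_connectedComponent hA
  rw [card_edgeFinset_typeGraph, Fintype.card_sum, Fintype.card_fin, Fintype.card_fin] at hcount
  rw [typeDim, ← Nat.cast_sum]
  lia

end TypeGraph

section TropicalOrientedMatroid

variable {n d : ℕ} {M S : Set (Fin n → Finset (Fin d))} {A B C : Fin n → Finset (Fin d)}

namespace IsTOM

theorem nonempty (hM : IsTOM n d M) (hA : A ∈ M) (i : Fin n) : (A i).Nonempty :=
  hM.1 A hA i

theorem compAcyclic (hM : IsTOM n d M) (hA : A ∈ M) (hB : B ∈ M) : CompAcyclic A B :=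
  hM.2.2.1 A hA B hB

theorem exists_mem_hull_eq_union (hM : IsTOM n d M) (hA : A ∈ M) (hB : B ∈ M) (j : Fin n) :
    ∃ C ∈ Hull M A B, C j = A j ∪ B j :=
  let ⟨C, hC, hCj, hCAB⟩ := hM.2.2.2.1 A hA B hB j
  ⟨C, ⟨hC, hCAB⟩, hCj⟩

theorem refineType_mem (hM : IsTOM n d M) (hA : A ∈ M) {P : List (Finset (Fin d))}
    (hP : IsOrderedPartition P) : refineType A P ∈ M :=
  hM.2.2.2.2 A hA P hP

theorem mem_of_forall_minimizers {β : Type*} [LinearOrder β] (hM : IsTOM n d M) (hA : A ∈ M)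
    (hBne : ∀ i, (B i).Nonempty) (hBA : B ≤ A) (f : Fin d → β)
    (hf : ∀ i, ∀ x ∈ B i, ∀ y ∈ A i, f x ≤ f y ∧ (f y ≤ f x → y ∈ B i)) : B ∈ M := by
  have hB : refineType A (fiberPartition f) = B := by
    ext i y
    obtain ⟨x, hx⟩ := hBne i
    simp only [refineType, refineEntry_fiberPartition, mem_filter]
    exact ⟨fun ⟨hyA, hy⟩ => (hf i x hx y hyA).2 (hy x (hBA i hx)),
      fun hy => ⟨hBA i hy, fun z hz => (hf i y hy z hz).1⟩⟩
  exact hB ▸ hM.refineType_mem hA (isOrderedPartition_fiberPartition f)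

theorem inter_mem (hM : IsTOM n d M) (hA : A ∈ M) (hB : B ∈ M)
    (hAB : ∀ i, (A i ∩ B i).Nonempty) : (fun i => A i ∩ B i) ∈ M := by
  obtain ⟨f, hf⟩ := exists_rank_reflTransGen (CompStep A B)
  refine hM.mem_of_forall_minimizers hA hAB (fun i => inter_subset_left) f fun i x hx y hy => ?_
  obtain ⟨hxA, hxB⟩ := mem_inter.1 hx
  rcases eq_or_ne y x with rfl | hyx
  · exact ⟨le_rfl, fun _ => hx⟩
  · obtain ⟨hle, hback⟩ := hf y x (.single ⟨i, hy, hxB, hyx⟩)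
    refine ⟨hle, fun hge => mem_inter.2 ⟨hy, ?_⟩⟩
    -- Were `y ∉ B i`, the edge from `y` to `x` would be directed and lie on a closed walk.
    by_contra hyB
    exact hM.compAcyclic hA hB ⟨y, x, ⟨i, hy, hxB, hyx, fun h => hyB h.1⟩, hback hge⟩

theorem update_erase_mem_of_isBridge (hM : IsTOM n d M) (hA : A ∈ M) {i : Fin n} {j : Fin d}
    (hbridge : (typeGraph A).IsBridge s(.inl i, .inr j)) (hne : ((A i).erase j).Nonempty) :
    Function.update A i ((A i).erase j) ∈ M := by
  -- Deleting the bridge splits off the component of `D_j`; weight its nodes heavier than the rest.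
  set H := (typeGraph A).deleteEdges {s(.inl i, .inr j)}
  have hH {i' k} (hk : k ∈ A i') (hne : i' = i → k ≠ j) : H.Reachable (.inl i') (.inr k) := by
    refine (deleteEdges_adj.2 ⟨typeGraph_adj_inl_inr.2 hk, ?_⟩).reachable
    simpa using hne
  refine hM.mem_of_forall_minimizers hA ?_ ?_ (fun k => H.Reachable (.inr j) (.inr k)) ?_
  · exact (Function.forall_update_iff A fun _ s => s.Nonempty).2
      ⟨hne, fun k _ => hM.nonempty hA k⟩
  · exact update_le_self_iff.2 (erase_subset _ _)
  · intro i' x hx y hy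
    rcases eq_or_ne i' i with rfl | hi
    · rw [Function.update_self] at hx ⊢
      obtain ⟨hxj, hxA⟩ := mem_erase.1 hx
      have hx_not : ¬ H.Reachable (.inr j) (.inr x) := fun h =>
        hbridge ((hH hxA fun _ => hxj).trans h.symm)
      refine ⟨fun h => (hx_not h).elim, fun h => mem_erase.2 ⟨?_, hy⟩⟩
      rintro rfl
      exact hx_not (h .rfl)
    · rw [Function.update_of_ne hi] at hx ⊢
      have hxy : H.Reachable (.inr x) (.inr y) :=
        (hH hx fun h => (hi h).elim).symm.trans (hH hy fun h => (hi h).elim)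
      exact ⟨fun h => h.trans hxy, fun _ => hy⟩

theorem mem_of_le (hM : IsTOM n d M) (hgen : InGeneralPosition M) (hA : A ∈ M) (hBA : B ≤ A)
    (hBne : ∀ i, (B i).Nonempty) : B ∈ M := by
  obtain ⟨C, -, ⟨hCM, hBC⟩, hCmin⟩ :=
    exists_minimal_le_of_wellFoundedLT (fun C => C ∈ M ∧ B ≤ C) A ⟨hA, hBA⟩
  suffices hCB : C ≤ B from hBC.antisymm hCB ▸ hCM
  intro i j hj
  by_contra hjB
  have hB_sub : B i ⊆ (C i).erase j := subset_erase.2 ⟨hBC i, hjB⟩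
  have hbridge : (typeGraph C).IsBridge s(.inl i, .inr j) :=
    isAcyclic_iff_forall_adj_isBridge.1 (hgen C hCM) (typeGraph_adj_inl_inr.2 hj)
  have herase := hM.update_erase_mem_of_isBridge hCM hbridge ((hBne i).mono hB_sub)
  have hC_le : C ≤ Function.update C i ((C i).erase j) :=
    hCmin ⟨herase, le_update_iff.2 ⟨hB_sub, fun k _ => hBC k⟩⟩
      (update_le_self_iff.2 (erase_subset _ _))
  simpa using hC_le i hj

end IsTOM

/-- The positions at which two types are incomparable; their number is the induction measure in
the proof that convex sets of types are connected. -/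
def incomparablePositions (A B : Fin n → Finset (Fin d)) : Finset (Fin n) :=
  {i | ¬ (A i ⊆ B i ∨ B i ⊆ A i)}

theorem incomparablePositions_ssubset_of_mem_hull (hC : C ∈ Hull M A B) {j : Fin n}
    (hj : j ∈ incomparablePositions A B) (hCj : C j = A j ∪ B j) :
    incomparablePositions A C ⊂ incomparablePositions A B ∧
      incomparablePositions C B ⊂ incomparablePositions A B := by
  have hjC : j ∉ incomparablePositions A C ∧ j ∉ incomparablePositions C B := by
    simp [incomparablePositions, hCj]
  have hsub (i : Fin n) (hi : A i ⊆ B i ∨ B i ⊆ A i) :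
      (A i ⊆ C i ∨ C i ⊆ A i) ∧ (C i ⊆ B i ∨ B i ⊆ C i) := by
    rcases hC.2 i with h | h | h <;> simp [h, hi]
  rw [ssubset_iff_of_subset, ssubset_iff_of_subset]
  · exact ⟨⟨j, hj, hjC.1⟩, j, hj, hjC.2⟩
  · exact monotone_filter_right _ fun i _ hi hAB => hi (hsub i hAB).2
  · exact monotone_filter_right _ fun i _ hi hAB => hi (hsub i hAB).1

/-- A set of types is convex in `M` if it contains the hull in `M` of any two of its elements. -/
def IsConvexIn (M S : Set (Fin n → Finset (Fin d))) : Prop :=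
  ∀ A ∈ S, ∀ B ∈ S, Hull M A B ⊆ S

theorem IsConvexIn.connectedIn_of_comparable (hS : IsConvexIn M S) (hM : IsTOM n d M)
    (hSM : S ⊆ M) (hA : A ∈ S) (hB : B ∈ S) (hAB : ∀ i, A i ⊆ B i ∨ B i ⊆ A i) :
    ConnectedIn S A B := by
  have hinter (i : Fin n) : A i ∩ B i = A i ∨ A i ∩ B i = B i :=
    (hAB i).imp inter_eq_left.2 inter_eq_right.2
  have hne (i : Fin n) : (A i ∩ B i).Nonempty := by
    rcases hinter i with h | h <;> rw [h]
    exacts [hM.nonempty (hSM hA) i, hM.nonempty (hSM hB) i]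
  have hmem : (fun i => A i ∩ B i) ∈ S := hS A hA B hB
    ⟨hM.inter_mem (hSM hA) (hSM hB) hne, fun i => (hinter i).imp_right .inl⟩
  exact .tail (.single ⟨hA, hmem, .inr fun i => inter_subset_left⟩)
    ⟨hmem, hB, .inl fun i => inter_subset_right⟩

theorem IsConvexIn.connectedIn (hS : IsConvexIn M S) (hM : IsTOM n d M) (hSM : S ⊆ M)
    (hA : A ∈ S) (hB : B ∈ S) : ConnectedIn S A B := by
  induction hm : #(incomparablePositions A B) using Nat.strong_induction_on generalizing A B with
  | _ m ih =>
  subst hm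
  rcases (incomparablePositions A B).eq_empty_or_nonempty with hcomp | ⟨j, hj⟩
  · exact hS.connectedIn_of_comparable hM hSM hA hB <| by
      simpa [incomparablePositions, filter_eq_empty_iff, or_iff_not_imp_left] using hcomp
  · obtain ⟨C, hC, hCj⟩ := hM.exists_mem_hull_eq_union (hSM hA) (hSM hB) j
    have hCS : C ∈ S := hS A hA B hB hC
    obtain ⟨hAC, hCB⟩ := incomparablePositions_ssubset_of_mem_hull hC hj hCj
    exact (ih _ (card_lt_card hAC) hA hCS rfl).trans (ih _ (card_lt_card hCB) hCS hB rfl)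

/-- The set `M(I,J)` of the types `A` of `M` such that every `A i` is contained in `I i` and meets
every member of `J i`. -/
def restrictedTypes (M : Set (Fin n → Finset (Fin d))) (I : Fin n → Finset (Fin d))
    (J : Fin n → Finset (Finset (Fin d))) : Set (Fin n → Finset (Fin d)) :=
  {A | A ∈ M ∧ ∀ i, A i ⊆ I i ∧ ∀ p ∈ J i, (A i ∩ p).Nonempty}

theorem isConvexIn_restrictedTypes (M : Set (Fin n → Finset (Fin d)))
    (I : Fin n → Finset (Fin d)) (J : Fin n → Finset (Finset (Fin d))) :
    IsConvexIn M (restrictedTypes M I J) := by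
  rintro A ⟨-, hA⟩ B ⟨-, hB⟩ C ⟨hCM, hC⟩
  refine ⟨hCM, fun i => ?_⟩
  rcases hC i with h | h | h <;> rw [h]
  · exact hA i
  · exact hB i
  · exact ⟨union_subset (hA i).1 (hB i).1, fun p hp =>
      ((hA i).2 p hp).mono (inter_subset_inter_right subset_union_left)⟩

variable {I : Fin n → Finset (Fin d)} {J : Fin n → Finset (Finset (Fin d))}

theorem typeDim_le_of_mem_restrictedTypes (hA : A ∈ restrictedTypes M I J)
    (hacyclic : (typeGraph A).IsAcyclic)
    (hJ : ∀ i, (J i : Set (Finset (Fin d))).PairwiseDisjoint id) :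
    typeDim A ≤ (d : ℤ) + n - 1 - ∑ i, (#(J i) : ℤ) := by
  have hcard : ∀ i, #(J i) ≤ #(A i) := fun i => by
    obtain ⟨t, htA, -, ht⟩ := exists_transversal_subset (hJ i) (hA.2 i).2
    exact ht ▸ card_le_card htA
  rw [typeDim_eq_of_isAcyclic hacyclic]
  gcongr with i
  exact hcard i

theorem exists_le_typeDim_eq_of_mem_restrictedTypes (hM : IsTOM n d M)
    (hgen : InGeneralPosition M) (hA : A ∈ restrictedTypes M I J)
    (hJ : ∀ i, (J i : Set (Finset (Fin d))).PairwiseDisjoint id) (hJne : ∀ i, (J i).Nonempty) :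
    ∃ B ∈ restrictedTypes M I J, B ≤ A ∧
      typeDim B = (d : ℤ) + n - 1 - ∑ i, (#(J i) : ℤ) := by
  obtain ⟨hAM, hAIJ⟩ := hA
  choose B hBA hBJ hBcard using fun i => exists_transversal_subset (hJ i) (hAIJ i).2
  have hBne : ∀ i, (B i).Nonempty := fun i => card_pos.1 (hBcard i ▸ (hJne i).card_pos)
  have hBM : B ∈ M := hM.mem_of_le hgen hAM hBA hBne
  refine ⟨B, ⟨hBM, fun i => ⟨(hBA i).trans (hAIJ i).1, hBJ i⟩⟩, hBA, ?_⟩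
  simp only [typeDim_eq_of_isAcyclic (hgen B hBM), hBcard]

theorem stmt_5_general (M : Set (Fin n → Finset (Fin d)))
    (hM : IsTOM n d M) (hgen : InGeneralPosition M) (I : Fin n → Finset (Fin d))
    (J : Fin n → Finset (Finset (Fin d)))
    (hJdisj : ∀ i, (J i : Set (Finset (Fin d))).PairwiseDisjoint id)
    (hJne : 0 < d → ∀ i, (J i).Nonempty) :
    (IsConvexIn M (restrictedTypes M I J) ∧
      (∀ A ∈ restrictedTypes M I J, ∀ B ∈ restrictedTypes M I J,
        ConnectedIn (restrictedTypes M I J) A B)) ∧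
    (∀ A ∈ restrictedTypes M I J, typeDim A ≤ (d : ℤ) + n - 1 - ∑ i, (#(J i) : ℤ)) ∧
    (∀ A ∈ restrictedTypes M I J, ∃ B ∈ restrictedTypes M I J, (∀ i, B i ⊆ A i) ∧
      typeDim B = (d : ℤ) + n - 1 - ∑ i, (#(J i) : ℤ)) := by
  have hconv := isConvexIn_restrictedTypes M I J
  refine ⟨⟨hconv, fun A hA B hB => hconv.connectedIn hM (fun _ h => h.1) hA hB⟩,
    fun A hA => typeDim_le_of_mem_restrictedTypes hA (hgen A hA.1) hJdisj, fun A hA => ?_⟩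
  have hJne' : ∀ i, (J i).Nonempty := fun i => hJne (hM.nonempty hA.1 i).choose.pos i
  exact exists_le_typeDim_eq_of_mem_restrictedTypes hM hgen hA hJdisj hJne'

end TropicalOrientedMatroid

theorem stmt_5 {n d : ℕ} (M : Set (Fin n → Finset (Fin d)))
    (hM : IsTOM n d M) (hgen : InGeneralPosition M)
    (I : Fin n → Finset (Fin d)) (hI : ∀ i, (I i).Nonempty)
    (J : Fin n → Finset (Finset (Fin d)))
    (hJne : ∀ i, ∀ p ∈ J i, p.Nonempty)
    (hJdisj : ∀ i, ∀ p ∈ J i, ∀ q ∈ J i, p ≠ q → Disjoint p q)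
    (hJcov : ∀ i, (J i).biUnion id = Finset.univ) :
    -- `M(I,J)`
    let MIJ : Set (Fin n → Finset (Fin d)) :=
      {A | A ∈ M ∧ ∀ i, A i ⊆ I i ∧ ∀ p ∈ J i, (A i ∩ p).Nonempty}
    -- (a) `M(I,J)` is convex (hence connected if nonempty)
    ((∀ A ∈ MIJ, ∀ B ∈ MIJ, Hull M A B ⊆ MIJ) ∧
      (∀ A ∈ MIJ, ∀ B ∈ MIJ, ConnectedIn MIJ A B)) ∧
    -- (b) dimension bound
    (∀ A ∈ MIJ, typeDim A ≤ (d : ℤ) + n - 1 - ∑ i : Fin n, ((J i).card : ℤ)) ∧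
    -- (c) existence of a maximal-dimensional refinement below any element
    (∀ A ∈ MIJ, ∃ B ∈ MIJ, (∀ i, B i ⊆ A i) ∧
      typeDim B = (d : ℤ) + n - 1 - ∑ i : Fin n, ((J i).card : ℤ)) := by
  have hJnonempty : 0 < d → ∀ i, (J i).Nonempty := fun hd i => by
    have hcov : ((J i).biUnion id).Nonempty := hJcov i ▸ ⟨⟨0, hd⟩, mem_univ _⟩
    exact (biUnion_nonempty.1 hcov).imp fun _ h => h.1
  exact stmt_5_general M hM hgen I J (fun i p hp q hq => hJdisj i p hp q hq) hJnonempty
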